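/- Let γ > 1, τ > 0, T > 0, ρ̄ = 1, M > 0 and σ̃ > 0. Suppose (ρ, u, S) ∈ C¹([0,T) × ℝ; ℝ³) solves the relaxation system ρ_t + (ρu)_x = 0, ρu_t + ρuu_x + (ρ^γ)_x = S_x, τρ(S_t + uS_x) − u_x = −S with ρ > 0, that for every t ∈ [0,T) one has (ρ(t,x), u(t,x), S(t,x)) = (1, 0, 0) whenever |x| ≥ M + σ̃t, and that ∫_ℝ (ρ(t,x) − 1) dx ≥ 0 for all t ∈ [0,T). Then the weighted momentum F(t) := ∫_ℝ x ρ(t,x) u(t,x) dx satisfies, for all t ∈ [0,T): F′(t) ≥ ∫_ℝ ρ(t,x)u(t,x)² dx − (1/2)∫_ℝ S(t,x)² dx − (M + σ̃t). -/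

import Mathlib

open MeasureTheory

/-- Time partial derivative, taken within the time interval `[0, T)`. -/
noncomputable def pderivT (T : ℝ) (f : ℝ × ℝ → ℝ) (p : ℝ × ℝ) : ℝ :=
  derivWithin (fun s => f (s, p.2)) (Set.Ico 0 T) p.1

/-- Space partial derivative. -/
noncomputable def pderivX (f : ℝ × ℝ → ℝ) (p : ℝ × ℝ) : ℝ :=
  deriv (fun y => f (p.1, y)) p.2

/-!
With the flux `G = ρu² + (p(ρ) - p(ρ₀)) - S` relative to the background density `ρ₀`, the mass and
momentum equations combine into the conservation law `(ρu)_t + G_x = 0`, so that integrating by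
parts yields `F′ = -∫ x G_x = ∫ G`. The pressure part of `∫ G` is nonnegative, because the graph of
the convex function `p` lies above its tangent at `ρ₀` and the excess mass `∫ (ρ - ρ₀)` is
nonnegative. Young's inequality `S ≤ S²/2 + 1/2` on the propagation region `|x| < R(t)`, of length
`2R(t)`, bounds the stress part.
-/

open Set Filter Topology

section Integrals

variable {α : Type*} [MeasurableSpace α] {μ : Measure α}

lemma hasDerivWithinAt_integral_of_dominated_of_convex
    {E : Type*} [NormedAddCommGroup E] [NormedSpace ℝ E] {F F' : ℝ → α → E} {I : Set ℝ} {t : ℝ}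
    {bound : α → ℝ} (hI : Convex ℝ I) (ht : t ∈ I) (hF_int : ∀ s ∈ I, Integrable (F s) μ)
    (h_bound : ∀ᵐ a ∂μ, ∀ s ∈ I, ‖F' s a‖ ≤ bound a) (bound_integrable : Integrable bound μ)
    (h_diff : ∀ᵐ a ∂μ, ∀ s ∈ I, HasDerivWithinAt (F · a) (F' s a) I s) :
    HasDerivWithinAt (fun s ↦ ∫ a, F s a ∂μ) (∫ a, F' t a ∂μ) I t := by
  rw [hasDerivWithinAt_iff_tendsto_slope]
  have h_slope : ∀ᶠ s in 𝓝[I \ {t}] t,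
      ∫ a, slope (F · a) t s ∂μ = slope (fun s ↦ ∫ a, F s a ∂μ) t s := by
    filter_upwards [self_mem_nhdsWithin] with s hs
    simp only [slope_def_module, integral_smul, integral_sub (hF_int s hs.1) (hF_int t ht)]
  refine Tendsto.congr' h_slope (tendsto_integral_filter_of_dominated_convergence bound ?_ ?_
    bound_integrable ?_)
  · filter_upwards [self_mem_nhdsWithin] with s hs
    simp only [slope_def_module]
    exact (((hF_int s hs.1).sub (hF_int t ht)).smul _).aestronglyMeasurable
  · filter_upwards [self_mem_nhdsWithin] with s hs
    filter_upwards [h_bound, h_diff] with a hba hda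
    have hst : 0 < ‖s - t‖ := norm_pos_iff.2 (sub_ne_zero.2 hs.2)
    rw [slope_def_module, norm_smul, norm_inv, inv_mul_le_iff₀ hst, mul_comm]
    exact hI.norm_image_sub_le_of_norm_hasDerivWithin_le hda hba ht hs.1
  · filter_upwards [h_diff] with a hda
    exact hasDerivWithinAt_iff_tendsto_slope.1 (hda t ht)

lemma mul_sub_le_sub_of_convexOn {s : Set ℝ} {f : ℝ → ℝ} {f' x y : ℝ} (hf : ConvexOn ℝ s f)
    (hx : x ∈ s) (hy : y ∈ s) (hf' : HasDerivAt f f' x) : f' * (y - x) ≤ f y - f x := by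
  rcases lt_trichotomy x y with hxy | rfl | hyx
  · have h := hf.le_slope_of_hasDerivAt hx hy hxy hf'
    rwa [slope_def_field, le_div_iff₀ (sub_pos.2 hxy)] at h
  · simp
  · have h := hf.slope_le_of_hasDerivAt hy hx hyx hf'
    rw [slope_def_field, div_le_iff₀ (sub_pos.2 hyx)] at h
    linarith

-- Jensen's inequality in a form that makes sense for an infinite measure.
lemma mul_integral_sub_le_of_convexOn {s : Set ℝ} {f : ℝ → ℝ} {f' c : ℝ} {g : α → ℝ}
    (hf : ConvexOn ℝ s f) (hc : c ∈ s) (hf' : HasDerivAt f f' c) (hg : ∀ x, g x ∈ s)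
    (hg_int : Integrable (fun x ↦ g x - c) μ) (hfg_int : Integrable (fun x ↦ f (g x) - f c) μ) :
    f' * ∫ x, (g x - c) ∂μ ≤ ∫ x, (f (g x) - f c) ∂μ := by
  rw [← integral_const_mul]
  exact integral_mono (hg_int.const_mul f') hfg_int
    fun x ↦ mul_sub_le_sub_of_convexOn hf hc (hg x) hf'

lemma integral_le_half_integral_sq_add {B : Set α} {f : α → ℝ} (hB : μ B ≠ ⊤)
    (hf : Integrable f μ) (hf_sq : Integrable (fun x ↦ f x ^ 2) μ) (hfB : ∀ x ∉ B, f x = 0) :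
    ∫ x, f x ∂μ ≤ 1 / 2 * ∫ x, f x ^ 2 ∂μ + μ.real B / 2 := by
  have h_half : IntegrableOn (fun _ ↦ (1 / 2 : ℝ)) B μ := integrableOn_const hB
  have h_sq : IntegrableOn (fun x ↦ 1 / 2 * f x ^ 2) B μ := (hf_sq.const_mul _).integrableOn
  calc ∫ x, f x ∂μ
      = ∫ x in B, f x ∂μ := (setIntegral_eq_integral_of_forall_compl_eq_zero hfB).symm
    _ ≤ ∫ x in B, (1 / 2 * f x ^ 2 + 1 / 2) ∂μ :=
        integral_mono hf.integrableOn (Integrable.fun_add h_sq h_half)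
          fun x ↦ by dsimp only; linarith [sq_nonneg (f x - 1)]
    _ = 1 / 2 * ∫ x in B, f x ^ 2 ∂μ + μ.real B / 2 := by
        rw [integral_add h_sq h_half, integral_const_mul, setIntegral_const, smul_eq_mul]
        ring
    _ = 1 / 2 * ∫ x, f x ^ 2 ∂μ + μ.real B / 2 := by
        rw [setIntegral_eq_integral_of_forall_compl_eq_zero fun x hx ↦ by simp [hfB x hx]]

end Integrals

lemma integral_id_mul_deriv {g : ℝ → ℝ} (hg : ContDiff ℝ 1 g) (hgc : HasCompactSupport g) :
    ∫ x, x * deriv g x = -∫ x, g x := by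
  have hg' : Continuous (deriv g) := hg.continuous_deriv le_rfl
  have h := integral_mul_deriv_eq_deriv_mul_of_integrable (u := id) (u' := fun _ ↦ 1)
    (fun x _ ↦ hasDerivAt_id x) (fun x _ ↦ (hg.differentiable one_ne_zero x).hasDerivAt)
    ((continuous_id.mul hg').integrable_of_hasCompactSupport hgc.deriv.mul_left)
    ((continuous_const.mul hg.continuous).integrable_of_hasCompactSupport hgc.mul_left)
    ((continuous_id.mul hg.continuous).integrable_of_hasCompactSupport hgc.mul_left)
  simpa only [id, one_mul] using h

lemma hasCompactSupport_of_forall_le_abs {E : Type*} [Zero E] {g : ℝ → E} {r : ℝ}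
    (hg : ∀ x, r ≤ |x| → g x = 0) : HasCompactSupport g :=
  HasCompactSupport.intro (isCompact_closedBall 0 r) fun x hx ↦
    hg x (not_le.1 (mt mem_closedBall_zero_iff.2 hx)).le

lemma integrable_of_forall_le_abs {E : Type*} [NormedAddCommGroup E] {g : ℝ → E} {r : ℝ}
    (hg : Continuous g) (hgr : ∀ x, r ≤ |x| → g x = 0) : Integrable g :=
  hg.integrable_of_hasCompactSupport (hasCompactSupport_of_forall_le_abs hgr)

section Slab

variable {T : ℝ} {f : ℝ × ℝ → ℝ} {t : ℝ}

lemma contDiff_slice (hf : ContDiffOn ℝ 1 f (Ico 0 T ×ˢ univ)) (ht : t ∈ Ico 0 T) :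
    ContDiff ℝ 1 (fun x ↦ f (t, x)) :=
  contDiffOn_univ.1 <| hf.comp (contDiff_prodMk_right t).contDiffOn fun _ _ ↦ ⟨ht, trivial⟩

lemma hasDerivAt_pderivX (hf : ContDiffOn ℝ 1 f (Ico 0 T ×ˢ univ)) (ht : t ∈ Ico 0 T) (x : ℝ) :
    HasDerivAt (fun y ↦ f (t, y)) (pderivX f (t, x)) x :=
  ((contDiff_slice hf ht).differentiable one_ne_zero x).hasDerivAt

lemma pderivT_eq_fderivWithin (hf : ContDiffOn ℝ 1 f (Ico 0 T ×ˢ univ)) {q : ℝ × ℝ}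
    (hq : q ∈ Ico 0 T ×ˢ univ) :
    pderivT T f q = fderivWithin ℝ f (Ico 0 T ×ˢ univ) q (1, 0) := by
  have h_line : HasDerivWithinAt (fun s : ℝ ↦ (s, q.2)) (1, 0) (Ico 0 T) q.1 :=
    (hasDerivWithinAt_id _ _).prodMk (hasDerivWithinAt_const _ _ _)
  exact ((hf.differentiableOn one_ne_zero q hq).hasFDerivWithinAt.comp_hasDerivWithinAt
    (f := fun s : ℝ ↦ (s, q.2)) q.1 h_line
    fun s hs ↦ ⟨hs, trivial⟩).derivWithin (uniqueDiffOn_Ico 0 T _ hq.1)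

lemma continuousOn_pderivT (hf : ContDiffOn ℝ 1 f (Ico 0 T ×ˢ univ)) :
    ContinuousOn (pderivT T f) (Ico 0 T ×ˢ univ) :=
  ((hf.continuousOn_fderivWithin ((uniqueDiffOn_Ico 0 T).prod uniqueDiffOn_univ)
    le_rfl).clm_apply continuousOn_const).congr fun _ hq ↦ pderivT_eq_fderivWithin hf hq

lemma hasDerivWithinAt_pderivT (hf : ContDiffOn ℝ 1 f (Ico 0 T ×ˢ univ)) (ht : t ∈ Ico 0 T)
    (x : ℝ) : HasDerivWithinAt (fun s ↦ f (s, x)) (pderivT T f (t, x)) (Ico 0 T) t := by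
  have h_slice : ContDiffOn ℝ 1 (fun s ↦ f (s, x)) (Ico 0 T) :=
    hf.comp (contDiff_prodMk_left x).contDiffOn fun _ hs ↦ ⟨hs, trivial⟩
  exact (h_slice.differentiableOn one_ne_zero t ht).hasDerivWithinAt

/-- The field `f` on `[0, T) × ℝ` vanishes outside the propagation region
`B_t = {|x| < R t}`; the radius `R` generalizes the paper's `M + σ̃t`. -/
def VanishesOutside (T : ℝ) (R : ℝ → ℝ) (f : ℝ × ℝ → ℝ) : Prop :=
  ∀ t ∈ Ico 0 T, ∀ x, R t ≤ |x| → f (t, x) = 0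

variable {R : ℝ → ℝ}

lemma pderivT_eq_zero_of_forall_mem_Icc {t₁ x : ℝ} (hf : ContDiffOn ℝ 1 f (Ico 0 T ×ˢ univ))
    (ht₁ : t₁ ∈ Ioo 0 T) (hfx : ∀ s ∈ Icc 0 t₁, f (s, x) = 0) (ht : t ∈ Icc 0 t₁) :
    pderivT T f (t, x) = 0 := by
  have h_sub : Icc 0 t₁ ⊆ Ico 0 T := Icc_subset_Ico_right ht₁.2
  have h_zero : HasDerivWithinAt (fun s ↦ f (s, x)) 0 (Icc 0 t₁) t :=
    (hasDerivWithinAt_const t _ 0).congr hfx (hfx t ht)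
  exact (uniqueDiffOn_Icc ht₁.1 t ht).eq_deriv _
    ((hasDerivWithinAt_pderivT hf (h_sub ht) x).mono h_sub) h_zero

lemma hasDerivWithinAt_integral_slice (hf : ContDiffOn ℝ 1 f (Ico 0 T ×ˢ univ))
    (hR : MonotoneOn R (Ico 0 T)) (hfR : VanishesOutside T R f) (ht : t ∈ Ico 0 T) :
    HasDerivWithinAt (fun s ↦ ∫ x, f (s, x)) (∫ x, pderivT T f (t, x)) (Ico 0 T) t := by
  obtain ⟨t₁, htt₁, ht₁T⟩ := exists_between ht.2
  have ht₁ : t₁ ∈ Ioo 0 T := ⟨ht.1.trans_lt htt₁, ht₁T⟩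
  have h_sub : Icc 0 t₁ ⊆ Ico 0 T := Icc_subset_Ico_right ht₁T
  have h_nhds : Icc 0 t₁ ∈ 𝓝[Ico 0 T] t := by
    filter_upwards [self_mem_nhdsWithin, mem_nhdsWithin_of_mem_nhds (Iic_mem_nhds htt₁)]
      with s hs hst₁ using ⟨hs.1, hst₁⟩
  set K := Metric.closedBall (0 : ℝ) (R t₁)
  have hK : IsCompact K := isCompact_closedBall 0 (R t₁)
  have hf_zero : ∀ x ∉ K, ∀ s ∈ Icc 0 t₁, f (s, x) = 0 := fun x hx s hs ↦
    hfR s (h_sub hs) x <| (hR (h_sub hs) (Ioo_subset_Ico_self ht₁) hs.2).trans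
      (not_le.1 (mt mem_closedBall_zero_iff.2 hx)).le
  obtain ⟨C, hC⟩ := (isCompact_Icc.prod hK).exists_bound_of_continuousOn
    ((continuousOn_pderivT hf).mono (prod_mono h_sub (subset_univ K)))
  have h_bound : ∀ x, ∀ s ∈ Icc 0 t₁,
      ‖pderivT T f (s, x)‖ ≤ K.indicator (fun _ ↦ C) x := by
    intro x s hs
    by_cases hx : x ∈ K
    · simpa [hx] using hC (s, x) ⟨hs, hx⟩
    · simp [hx, pderivT_eq_zero_of_forall_mem_Icc hf ht₁ (hf_zero x hx) hs]
  refine (hasDerivWithinAt_integral_of_dominated_of_convex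
    (F' := fun s x ↦ pderivT T f (s, x)) (convex_Icc 0 t₁) ⟨ht.1, htt₁.le⟩
    (fun s hs ↦ integrable_of_forall_le_abs (contDiff_slice hf (h_sub hs)).continuous
      (hfR s (h_sub hs))) (ae_of_all _ h_bound)
    ((integrable_indicator_iff hK.measurableSet).2 (integrableOn_const hK.measure_ne_top))
    (ae_of_all _ fun x s hs ↦ ?_)).mono_of_mem_nhdsWithin h_nhds
  exact (hasDerivWithinAt_pderivT hf (h_sub hs) x).mono h_sub

lemma hasDerivWithinAt_first_moment_of_conservation_law {m G : ℝ × ℝ → ℝ}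
    (hm : ContDiffOn ℝ 1 m (Ico 0 T ×ˢ univ)) (hG : ContDiffOn ℝ 1 G (Ico 0 T ×ˢ univ))
    (hR : MonotoneOn R (Ico 0 T)) (hmR : VanishesOutside T R m) (hGR : VanishesOutside T R G)
    (hmG : ∀ q ∈ Ico 0 T ×ˢ univ, pderivT T m q + pderivX G q = 0) (ht : t ∈ Ico 0 T) :
    HasDerivWithinAt (fun s ↦ ∫ x, x * m (s, x)) (∫ x, G (t, x)) (Ico 0 T) t := by
  have h_pderivT (x : ℝ) :
      pderivT T (fun q ↦ q.2 * m q) (t, x) = -(x * pderivX G (t, x)) := by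
    have h : pderivT T (fun q ↦ q.2 * m q) (t, x) = x * pderivT T m (t, x) :=
      ((hasDerivWithinAt_pderivT hm ht x).const_mul x).derivWithin (uniqueDiffOn_Ico 0 T t ht)
    linear_combination h + x * hmG (t, x) ⟨ht, trivial⟩
  have h_parts : ∫ x, x * pderivX G (t, x) = -∫ x, G (t, x) :=
    integral_id_mul_deriv (contDiff_slice hG ht) (hasCompactSupport_of_forall_le_abs (hGR t ht))
  have h := hasDerivWithinAt_integral_slice (contDiff_snd.contDiffOn.mul hm) hR
    (fun s hs x hx ↦ by simp [hmR s hs x hx]) ht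
  simpa only [h_pderivT, integral_neg, h_parts, neg_neg] using h

end Slab

section MomentumFlux

/-- Flux of the momentum `ρu` for the pressure law `p`, normalized by the constant `p ρ₀` so as to
vanish at the rest state `(ρ, u, S) = (ρ₀, 0, 0)`. The domain `X` is space-time, or
space at a fixed time. -/
def momentumFlux {X : Type*} (p : ℝ → ℝ) (ρ₀ : ℝ) (ρ u S : X → ℝ) (q : X) : ℝ :=
  ρ q * u q ^ 2 + (p (ρ q) - p ρ₀) - S q

variable {p : ℝ → ℝ} {ρ₀ : ℝ}

lemma pderivT_momentum_add_pderivX_momentumFlux {T : ℝ} {ρ u S : ℝ × ℝ → ℝ}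
    (hρ : ContDiffOn ℝ 1 ρ (Ico 0 T ×ˢ univ)) (hu : ContDiffOn ℝ 1 u (Ico 0 T ×ˢ univ))
    (hS : ContDiffOn ℝ 1 S (Ico 0 T ×ˢ univ))
    (hpρ : ContDiffOn ℝ 1 (fun q ↦ p (ρ q)) (Ico 0 T ×ˢ univ))
    {q : ℝ × ℝ} (hq : q ∈ Ico 0 T ×ˢ univ)
    (hmass : pderivT T ρ q + pderivX (fun q ↦ ρ q * u q) q = 0)
    (hmom : ρ q * pderivT T u q + ρ q * u q * pderivX u q + pderivX (fun q ↦ p (ρ q)) q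
      = pderivX S q) :
    pderivT T (fun q ↦ ρ q * u q) q + pderivX (momentumFlux p ρ₀ ρ u S) q = 0 := by
  obtain ⟨t, x⟩ := q
  have ht : t ∈ Ico 0 T := hq.1
  have hρx := hasDerivAt_pderivX hρ ht x
  have hux := hasDerivAt_pderivX hu ht x
  have h_momT : pderivT T (fun q ↦ ρ q * u q) (t, x)
      = pderivT T ρ (t, x) * u (t, x) + ρ (t, x) * pderivT T u (t, x) :=
    ((hasDerivWithinAt_pderivT hρ ht x).mul (hasDerivWithinAt_pderivT hu ht x)).derivWithin
      (uniqueDiffOn_Ico 0 T t ht)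
  have h_momX : pderivX (fun q ↦ ρ q * u q) (t, x)
      = pderivX ρ (t, x) * u (t, x) + ρ (t, x) * pderivX u (t, x) :=
    (hρx.mul hux).deriv
  have h_fluxX : pderivX (momentumFlux p ρ₀ ρ u S) (t, x)
      = pderivX ρ (t, x) * u (t, x) ^ 2
        + ρ (t, x) * ((2 : ℕ) * u (t, x) ^ (2 - 1) * pderivX u (t, x))
        + pderivX (fun q ↦ p (ρ q)) (t, x) - pderivX S (t, x) :=
    (((hρx.mul (hux.pow 2)).add ((hasDerivAt_pderivX hpρ ht x).sub_const (p ρ₀))).sub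
      (hasDerivAt_pderivX hS ht x)).deriv
  rw [h_momX] at hmass
  rw [h_momT, h_fluxX]
  push_cast
  linear_combination u (t, x) * hmass + hmom

lemma le_integral_momentumFlux {ρ u S : ℝ → ℝ} {p' r : ℝ}
    (hp : ConvexOn ℝ (Ioi 0) p) (hp' : HasDerivAt p p' ρ₀) (hp'_nonneg : 0 ≤ p') (hr : 0 ≤ r)
    (hρ : Continuous ρ) (hu : Continuous u) (hS : Continuous S) (hpos : ∀ x, 0 < ρ x)
    (hsupp : ∀ x, r ≤ |x| → ρ x = ρ₀ ∧ u x = 0 ∧ S x = 0) (hmass : 0 ≤ ∫ x, (ρ x - ρ₀)) :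
    (∫ x, ρ x * u x ^ 2) - (1 / 2) * (∫ x, S x ^ 2) - r ≤ ∫ x, momentumFlux p ρ₀ ρ u S x := by
  have hρ₀ : 0 < ρ₀ := (hsupp r (le_abs_self r)).1 ▸ hpos r
  have hpρ : Continuous fun x ↦ p (ρ x) := (hp.continuousOn isOpen_Ioi).comp_continuous hρ hpos
  have h_kin_int : Integrable fun x ↦ ρ x * u x ^ 2 :=
    integrable_of_forall_le_abs (r := r) (hρ.mul (hu.pow 2)) fun x hx ↦ by simp [hsupp x hx]
  have h_prs_int : Integrable fun x ↦ p (ρ x) - p ρ₀ :=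
    integrable_of_forall_le_abs (r := r) (hpρ.sub continuous_const)
      fun x hx ↦ by simp [hsupp x hx]
  have h_mass_int : Integrable fun x ↦ ρ x - ρ₀ :=
    integrable_of_forall_le_abs (r := r) (hρ.sub continuous_const) fun x hx ↦ by simp [hsupp x hx]
  have hS_int : Integrable S := integrable_of_forall_le_abs hS fun x hx ↦ (hsupp x hx).2.2
  have hS_sq_int : Integrable fun x ↦ S x ^ 2 :=
    integrable_of_forall_le_abs (r := r) (hS.pow 2) fun x hx ↦ by simp [hsupp x hx]
  have h_split : ∫ x, momentumFlux p ρ₀ ρ u S x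
      = (∫ x, ρ x * u x ^ 2) + (∫ x, (p (ρ x) - p ρ₀)) - ∫ x, S x := by
    rw [← integral_add h_kin_int h_prs_int]
    exact integral_sub (h_kin_int.add h_prs_int) hS_int
  have h_pressure : 0 ≤ ∫ x, (p (ρ x) - p ρ₀) :=
    (mul_nonneg hp'_nonneg hmass).trans <|
      mul_integral_sub_le_of_convexOn hp hρ₀ hp' hpos h_mass_int h_prs_int
  have h_stress : ∫ x, S x ≤ 1 / 2 * (∫ x, S x ^ 2) + r := by
    have h := integral_le_half_integral_sq_add (B := Metric.ball 0 r)
      measure_ball_lt_top.ne hS_int hS_sq_int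
      fun x hx ↦ (hsupp x (by simpa using hx)).2.2
    rwa [Real.volume_real_ball hr, mul_div_cancel_left₀ _ two_ne_zero] at h
  linarith

end MomentumFlux

theorem weighted_momentum_derivative_lower_bound_general
    {T ρ₀ : ℝ} {p R : ℝ → ℝ} {ρ u S : ℝ × ℝ → ℝ}
    (hp : ContDiffOn ℝ 1 p (Ioi 0)) (hp_convex : ConvexOn ℝ (Ioi 0) p) (hp' : 0 ≤ deriv p ρ₀)
    (hR : MonotoneOn R (Ico 0 T)) (hR_nonneg : ∀ t ∈ Ico 0 T, 0 ≤ R t)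
    (hρ : ContDiffOn ℝ 1 ρ (Ico 0 T ×ˢ univ)) (hu : ContDiffOn ℝ 1 u (Ico 0 T ×ˢ univ))
    (hS : ContDiffOn ℝ 1 S (Ico 0 T ×ˢ univ)) (hpos : ∀ q ∈ Ico 0 T ×ˢ univ, 0 < ρ q)
    (hmass : ∀ q ∈ Ico 0 T ×ˢ univ, pderivT T ρ q + pderivX (fun q ↦ ρ q * u q) q = 0)
    (hmom : ∀ q ∈ Ico 0 T ×ˢ univ,
      ρ q * pderivT T u q + ρ q * u q * pderivX u q + pderivX (fun q ↦ p (ρ q)) q = pderivX S q)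
    (hsupp : ∀ t ∈ Ico 0 T, ∀ x, R t ≤ |x| → ρ (t, x) = ρ₀ ∧ u (t, x) = 0 ∧ S (t, x) = 0)
    (hmass_nonneg : ∀ t ∈ Ico 0 T, 0 ≤ ∫ x, (ρ (t, x) - ρ₀)) :
    ∀ t ∈ Ico 0 T, ∃ F' : ℝ,
      HasDerivWithinAt (fun s ↦ ∫ x, x * (ρ (s, x) * u (s, x))) F' (Ico 0 T) t ∧
      (∫ x, ρ (t, x) * u (t, x) ^ 2) - (1 / 2) * (∫ x, S (t, x) ^ 2) - R t ≤ F' := by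
  intro t ht
  have hρ₀ : 0 < ρ₀ := (hsupp t ht (R t) (le_abs_self _)).1 ▸ hpos (t, R t) ⟨ht, trivial⟩
  have hpρ : ContDiffOn ℝ 1 (fun q ↦ p (ρ q)) (Ico 0 T ×ˢ univ) := hp.comp hρ hpos
  have h_flux : ContDiffOn ℝ 1 (momentumFlux p ρ₀ ρ u S) (Ico 0 T ×ˢ univ) :=
    ((hρ.mul (hu.pow 2)).add (hpρ.sub contDiffOn_const)).sub hS
  have hp_deriv : HasDerivAt p (deriv p ρ₀) ρ₀ :=
    (hp.differentiableOn one_ne_zero).hasDerivAt (Ioi_mem_nhds hρ₀)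
  refine ⟨∫ x, momentumFlux p ρ₀ ρ u S (t, x), ?_, ?_⟩
  · exact hasDerivWithinAt_first_moment_of_conservation_law (hρ.mul hu) h_flux hR
      (fun s hs x hx ↦ by simp [hsupp s hs x hx])
      (fun s hs x hx ↦ by simp [momentumFlux, hsupp s hs x hx])
      (fun q hq ↦ pderivT_momentum_add_pderivX_momentumFlux hρ hu hS hpρ hq (hmass q hq)
        (hmom q hq)) ht
  · exact le_integral_momentumFlux hp_convex hp_deriv hp' (hR_nonneg t ht)
      (contDiff_slice hρ ht).continuous (contDiff_slice hu ht).continuous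
      (contDiff_slice hS ht).continuous (fun x ↦ hpos (t, x) ⟨ht, trivial⟩) (hsupp t ht)
      (hmass_nonneg t ht)

/-- Lower bound (17) for the derivative of the weighted momentum
`F(t) = ∫ x ρ u dx` (reference state `ρ̄ = 1`):
`F′(t) ≥ ∫ ρu² − ½∫S² − (M + σ̃t)`. -/
theorem weighted_momentum_derivative_lower_bound
    (γ τ T M σt : ℝ) (hγ : 1 < γ) (hτ : 0 < τ) (hT : 0 < T) (hM : 0 < M) (hσt : 0 < σt)
    (ρ u S : ℝ × ℝ → ℝ)
    (hρ : ContDiffOn ℝ 1 ρ (Set.Ico 0 T ×ˢ (Set.univ : Set ℝ)))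
    (hu : ContDiffOn ℝ 1 u (Set.Ico 0 T ×ˢ (Set.univ : Set ℝ)))
    (hS : ContDiffOn ℝ 1 S (Set.Ico 0 T ×ˢ (Set.univ : Set ℝ)))
    (hpos : ∀ p ∈ Set.Ico 0 T ×ˢ (Set.univ : Set ℝ), 0 < ρ p)
    (hmass : ∀ p ∈ Set.Ico 0 T ×ˢ (Set.univ : Set ℝ),
      pderivT T ρ p + pderivX (fun q => ρ q * u q) p = 0)
    (hmom : ∀ p ∈ Set.Ico 0 T ×ˢ (Set.univ : Set ℝ),
      ρ p * pderivT T u p + ρ p * u p * pderivX u p + pderivX (fun q => ρ q ^ γ) p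
        = pderivX S p)
    (hrelax : ∀ p ∈ Set.Ico 0 T ×ˢ (Set.univ : Set ℝ),
      τ * ρ p * (pderivT T S p + u p * pderivX S p) - pderivX u p = - S p)
    (hsupp : ∀ t ∈ Set.Ico (0 : ℝ) T, ∀ x : ℝ, M + σt * t ≤ |x| →
      ρ (t, x) = 1 ∧ u (t, x) = 0 ∧ S (t, x) = 0)
    (hmassnonneg : ∀ t ∈ Set.Ico (0 : ℝ) T, 0 ≤ ∫ x : ℝ, (ρ (t, x) - 1)) :
    ∀ t ∈ Set.Ico (0 : ℝ) T,
      ∃ F' : ℝ,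
        HasDerivWithinAt (fun s : ℝ => ∫ x : ℝ, x * (ρ (s, x) * u (s, x))) F'
          (Set.Ico 0 T) t ∧
        (∫ x : ℝ, ρ (t, x) * u (t, x) ^ 2) - (1 / 2) * (∫ x : ℝ, S (t, x) ^ 2)
            - (M + σt * t) ≤ F' :=
  weighted_momentum_derivative_lower_bound_general
    (contDiffOn_id.rpow_const_of_ne fun _ h ↦ (mem_Ioi.1 h).ne')
    ((convexOn_rpow hγ.le).subset Ioi_subset_Ici_self (convex_Ioi 0))
    (by simpa using hγ.le.trans' zero_le_one)
    (fun _ _ _ _ h ↦ by gcongr) (fun t ht ↦ by have := ht.1; positivity)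
    hρ hu hS hpos hmass hmom hsupp hmassnonneg
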